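/- Let q : ℂ → ℂ be a Schwartz function and for each k ∈ ℂ let (u₁(·,k), u₂(·,k)) be the bounded continuous scattering solutions, i.e. u₁(·,k) = 1 + ∂̄⁻¹[e_{−k} q conj(u₂(·,k))] and u₂(·,k) = ∂̄⁻¹[e_{−k} q conj(u₁(·,k))]. Then there exist constants C and K (depending on q) such that sup_{z∈ℂ} |u₁(z,k) − 1| ≤ C/|k| for all |k| ≥ K; moreover, for each fixed z ∈ ℂ, u₂(z,k) → 0 as |k| → ∞. -/

import Mathlib

open MeasureTheory Complex ComplexConjugate Filter Bornology
open scoped ENNReal Topology SchwartzMap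

noncomputable section

/-- `e_k(z) = exp(i(conj k · z + k · conj z)/2)`. -/
def ek (k z : ℂ) : ℂ := Complex.exp (Complex.I * (conj k * z + k * conj z) / 2)

/-- The solid Cauchy transform `∂̄⁻¹[h](z) = (1/π) ∫ h(w)/(z-w) dA(w)`. -/
def dbarInv (h : ℂ → ℂ) (z : ℂ) : ℂ := (Real.pi : ℂ)⁻¹ * ∫ w : ℂ, h w / (z - w)

/-- The solid Cauchy transform `∂_z⁻¹[h](z) = (1/π) ∫ h(w)/(conj z - conj w) dA(w)`. -/
def dzInv (h : ℂ → ℂ) (z : ℂ) : ℂ := (Real.pi : ℂ)⁻¹ * ∫ w : ℂ, h w / (conj z - conj w)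

/-- The operator `S^k_q[F] = ∂̄⁻¹[e_{-k} q ∂_z⁻¹[e_k conj(q) F]]`. -/
def Sk (k : ℂ) (q F : ℂ → ℂ) : ℂ → ℂ :=
  dbarInv fun z => ek (-k) z * q z * dzInv (fun w => ek k w * conj (q w) * F w) z

/-- The Fourier transform on `ℂ ≅ ℝ²`. -/
def FT (f : ℂ → ℂ) (ξ : ℂ) : ℂ :=
  ∫ z : ℂ, Complex.exp (-(2 * Real.pi * Complex.I) * ((z.re * ξ.re + z.im * ξ.im : ℝ) : ℂ)) * f z

/-- The inverse Fourier transform on `ℂ ≅ ℝ²`. -/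
def FTinv (f : ℂ → ℂ) (x : ℂ) : ℂ :=
  ∫ ξ : ℂ, Complex.exp ((2 * Real.pi * Complex.I) * ((x.re * ξ.re + x.im * ξ.im : ℝ) : ℂ)) * f ξ

/-- `D^s`, the Fourier multiplier with symbol `|ξ|^s`. -/
def Ds (s : ℝ) (f : ℂ → ℂ) : ℂ → ℂ :=
  FTinv fun ξ => ((‖ξ‖ ^ s : ℝ) : ℂ) * FT f ξ

/-- The weighted Sobolev norm
`‖q‖_{H^{s,s}} = max {‖q‖₂, ‖D^s q‖₂, ‖|·|^s q‖₂}`, where by Plancherel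
`‖D^s q‖₂ = ‖ |ξ|^s (FT q)(ξ) ‖₂`. -/
def HssNorm (s : ℝ) (q : ℂ → ℂ) : ℝ≥0∞ :=
  max (eLpNorm q 2 volume)
    (max (eLpNorm (fun ξ : ℂ => ((‖ξ‖ ^ s : ℝ) : ℂ) * FT q ξ) 2 volume)
      (eLpNorm (fun z : ℂ => ((‖z‖ ^ s : ℝ) : ℂ) * q z) 2 volume))

/-- The Cauchy–Riemann operator `∂̄ = (∂/∂z₁ + i ∂/∂z₂)/2`. -/
def dbar (G : ℂ → ℂ) (z : ℂ) : ℂ := (fderiv ℝ G z 1 + Complex.I * fderiv ℝ G z Complex.I) / 2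

end

/-- `(u₁, u₂)` is a (bounded continuous) solution of the integral equations
`u₁ = 1 + ∂̄⁻¹[e_{-k} q conj u₂]`, `u₂ = ∂̄⁻¹[e_{-k} q conj u₁]`. -/
def IsScattering (q : ℂ → ℂ) (k : ℂ) (u₁ u₂ : ℂ → ℂ) : Prop :=
  Continuous u₁ ∧ IsBounded (Set.range u₁) ∧ Continuous u₂ ∧ IsBounded (Set.range u₂) ∧
  (∀ z : ℂ, u₁ z = 1 + dbarInv (fun w => ek (-k) w * q w * conj (u₂ w)) z) ∧
  (∀ z : ℂ, u₂ z = dbarInv (fun w => ek (-k) w * q w * conj (u₁ w)) z)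

/-! The Cauchy transform of a function in `L¹ ∩ L^∞` is bounded, Hölder continuous of every order
below `1`, and has second differences of order `|τ|`. Translation by `τ = π / conj k` changes the
sign of `e_k`, so `U = ∂̄⁻¹[e_k h]` satisfies `U(z) + U(z + τ) = -∂̄⁻¹[e_k (h(· + τ) - h)](z)`.
Together with `|U(z + τ) + U(z - τ) - 2 U(z)| = O(|τ|)` this bounds `4 |U|` by `O(|τ|)` plus the
modulus of continuity of `h` at `τ`.

For `T F = ∂̄⁻¹[e_{-k} q conj F]` it follows that `T 1 = O(1 / |k|)` and, `T F` being Hölder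
continuous, that `T²` is small on bounded functions as `|k| → ∞`. Hence the last term of
`u₁ - 1 = T² 1 + T² (u₁ - 1)` can be absorbed, and `u₂ = T 1 + T (u₁ - 1)` is small as well. -/

/-- `f` is integrable, and both its supremum and its `L¹` norm are at most `N`: an upper bound for
the norm of `L¹ ∩ L^∞`. It is the supremum, not the essential supremum, that is bounded, so that
the bound can be used pointwise. -/
structure L1SupBound {α E : Type*} [MeasurableSpace α] [NormedAddCommGroup E] (f : α → E) (N : ℝ)
    (μ : Measure α := by volume_tac) : Prop where
  integrable : Integrable f μ
  norm_le : ∀ x, ‖f x‖ ≤ N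
  integral_norm_le : ∫ x, ‖f x‖ ∂μ ≤ N

namespace L1SupBound

section Basic

variable {α E F : Type*} [MeasurableSpace α] [NormedAddCommGroup E] [NormedAddCommGroup F]
  {μ : Measure α} {f g : α → E} {M N c : ℝ}

theorem nonneg (hf : L1SupBound f N μ) : 0 ≤ N :=
  (integral_nonneg fun _ => norm_nonneg _).trans hf.integral_norm_le

theorem exists_of_integrable (hf : Integrable f μ) (hb : IsBounded (Set.range f)) :
    ∃ N, L1SupBound f N μ := by
  obtain ⟨R, hR⟩ := hb.exists_norm_le
  exact ⟨max R (∫ x, ‖f x‖ ∂μ), hf, fun x => (hR _ ⟨x, rfl⟩).trans (le_max_left _ _),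
    le_max_right _ _⟩

theorem of_norm_le_mul (hf : L1SupBound f N μ) {g : α → F} (hg : AEStronglyMeasurable g μ)
    (hc : 0 ≤ c) (hgf : ∀ x, ‖g x‖ ≤ c * ‖f x‖) : L1SupBound g (c * N) μ where
  integrable := (hf.integrable.norm.const_mul c).mono' hg (ae_of_all _ hgf)
  norm_le x := (hgf x).trans (mul_le_mul_of_nonneg_left (hf.norm_le x) hc)
  integral_norm_le := calc
    ∫ x, ‖g x‖ ∂μ ≤ ∫ x, c * ‖f x‖ ∂μ :=
      integral_mono_of_nonneg (ae_of_all _ fun _ => norm_nonneg _) (hf.integrable.norm.const_mul c)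
        (ae_of_all _ hgf)
    _ = c * ∫ x, ‖f x‖ ∂μ := integral_const_mul _ _
    _ ≤ c * N := mul_le_mul_of_nonneg_left hf.integral_norm_le hc

theorem of_norm_le (hf : L1SupBound f N μ) {g : α → F} (hg : AEStronglyMeasurable g μ)
    (hgf : ∀ x, ‖g x‖ ≤ ‖f x‖) : L1SupBound g N μ := by
  simpa only [one_mul] using
    hf.of_norm_le_mul hg zero_le_one fun x => (hgf x).trans_eq (one_mul _).symm

theorem add (hf : L1SupBound f M μ) (hg : L1SupBound g N μ) :
    L1SupBound (fun x => f x + g x) (M + N) μ where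
  integrable := hf.integrable.add hg.integrable
  norm_le x := (norm_add_le _ _).trans (add_le_add (hf.norm_le x) (hg.norm_le x))
  integral_norm_le := calc
    ∫ x, ‖f x + g x‖ ∂μ ≤ ∫ x, (‖f x‖ + ‖g x‖) ∂μ :=
      integral_mono (hf.integrable.add hg.integrable).norm
        (hf.integrable.norm.add hg.integrable.norm) fun _ => norm_add_le _ _
    _ = (∫ x, ‖f x‖ ∂μ) + ∫ x, ‖g x‖ ∂μ := integral_add hf.integrable.norm hg.integrable.norm
    _ ≤ M + N := add_le_add hf.integral_norm_le hg.integral_norm_le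

theorem comp_add_right {G : Type*} [MeasurableSpace G] [AddGroup G] [MeasurableAdd G]
    {μ : Measure G} [μ.IsAddRightInvariant] {f : G → E} (hf : L1SupBound f N μ) (v : G) :
    L1SupBound (fun x => f (x + v)) N μ where
  integrable := hf.integrable.comp_add_right v
  norm_le x := hf.norm_le (x + v)
  integral_norm_le :=
    (integral_add_right_eq_self (fun x => ‖f x‖) v).trans_le hf.integral_norm_le

end Basic

section Translation

variable {E F : Type*} [NormedAddCommGroup E] [NormedSpace ℝ E] [MeasurableSpace E]
  [BorelSpace E] [NormedAddCommGroup F] [NormedSpace ℝ F] [CompleteSpace F] {f : E → F} {N : ℝ}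

theorem norm_comp_add_right_sub_le_integral (hf : Differentiable ℝ f)
    (hN : ∀ x, ‖fderiv ℝ f x‖ ≤ N) (v x : E) :
    ‖f (x + v) - f x‖ ≤ ‖v‖ * ∫ t in Set.Ioc (0 : ℝ) 1, ‖fderiv ℝ f (x + t • v)‖ := by
  have hmeas : Measurable fun t : ℝ => ‖fderiv ℝ f (x + t • v)‖ :=
    ((measurable_fderiv ℝ f).comp (by fun_prop)).norm
  have hint : IntervalIntegrable (fun t : ℝ => ‖fderiv ℝ f (x + t • v)‖) volume 0 1 :=
    intervalIntegrable_const.mono_fun' (g := fun _ => N) hmeas.aestronglyMeasurable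
      (ae_of_all _ fun t => (norm_norm _).trans_le (hN _))
  have hderiv (t : ℝ) :
      HasDerivAt (fun t : ℝ => f (x + t • v)) (fderiv ℝ f (x + t • v) v) t := by
    refine (hf _).hasFDerivAt.comp_hasDerivAt t ?_
    simpa only [id_eq, one_smul] using ((hasDerivAt_id' t).smul_const v).const_add x
  have hdisp := norm_sub_le_integral_of_norm_deriv_le_of_le zero_le_one
    (fun t _ => (hderiv t).continuousAt.continuousWithinAt)
    (fun t _ => (hderiv t).differentiableAt.differentiableWithinAt)
    (ae_of_all _ fun t _ => (hderiv t).deriv.symm ▸ (fderiv ℝ f (x + t • v)).le_opNorm v)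
    (hint.mul_const ‖v‖)
  rwa [intervalIntegral.integral_mul_const, mul_comm, one_smul, zero_smul, add_zero,
    intervalIntegral.integral_of_le zero_le_one] at hdisp

variable [FiniteDimensional ℝ E] {μ : Measure E} [μ.IsAddHaarMeasure]

theorem comp_add_right_sub (hf : Differentiable ℝ f) (hN : L1SupBound (fderiv ℝ f) N μ) (v : E) :
    L1SupBound (fun x => f (x + v) - f x) (‖v‖ * N) μ := by
  have hmeas : Measurable fun p : E × ℝ => ‖fderiv ℝ f (p.1 + p.2 • v)‖ :=
    ((measurable_fderiv ℝ f).comp (by fun_prop)).norm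
  have htranslate (t : ℝ) : ∫ x, ‖fderiv ℝ f (x + t • v)‖ ∂μ = ∫ x, ‖fderiv ℝ f x‖ ∂μ :=
    integral_add_right_eq_self (fun x => ‖fderiv ℝ f x‖) _
  have hint : Integrable (fun p : E × ℝ => ‖fderiv ℝ f (p.1 + p.2 • v)‖)
      (μ.prod (volume.restrict (Set.Ioc 0 1))) := by
    refine (integrable_prod_iff' hmeas.aestronglyMeasurable).mpr
      ⟨ae_of_all _ fun t => hN.integrable.norm.comp_add_right (t • v), ?_⟩
    simp only [norm_norm, htranslate]
    exact integrable_const _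
  have hbound := norm_comp_add_right_sub_le_integral hf hN.norm_le v
  refine ⟨(hint.integral_prod_left.const_mul _).mono' ?_ (ae_of_all _ hbound), fun x => ?_, ?_⟩
  · exact (hf.continuous.comp (by fun_prop) |>.sub hf.continuous).aestronglyMeasurable
  · simpa only [add_sub_cancel_left, mul_comm N] using
      convex_univ.norm_image_sub_le_of_norm_fderiv_le (fun y _ => hf y) (fun y _ => hN.norm_le y)
        (Set.mem_univ x) (Set.mem_univ (x + v))
  · calc ∫ x, ‖f (x + v) - f x‖ ∂μ
        ≤ ∫ x, ‖v‖ * (∫ t in Set.Ioc (0 : ℝ) 1, ‖fderiv ℝ f (x + t • v)‖) ∂μ :=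
          integral_mono_of_nonneg (ae_of_all _ fun _ => norm_nonneg _)
            (hint.integral_prod_left.const_mul _) (ae_of_all _ hbound)
      _ = ‖v‖ * ∫ t in Set.Ioc (0 : ℝ) 1, ∫ x, ‖fderiv ℝ f (x + t • v)‖ ∂μ := by
          rw [integral_const_mul, integral_integral_swap hint]
      _ = ‖v‖ * ∫ x, ‖fderiv ℝ f x‖ ∂μ := by simp [htranslate]
      _ ≤ ‖v‖ * N := mul_le_mul_of_nonneg_left hN.integral_norm_le (norm_nonneg v)

end Translation

end L1SupBound

section RieszPotential

theorem pow_pred_mul_rpow_neg {n : ℕ} (hn : 0 < n) {r s : ℝ} (hr : 0 < r) :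
    r ^ (n - 1) * r ^ (-s) = r ^ ((n : ℝ) - 1 - s) := by
  rw [← Real.rpow_natCast, ← Real.rpow_add hr, Nat.cast_pred hn, ← sub_eq_add_neg]

theorem rpow_neg_mul_le_indicator_ball_mul_add {E : Type*} [SeminormedAddCommGroup E] {x : E}
    {s a N : ℝ} (hs : 0 ≤ s) (ha : 0 ≤ a) (haN : a ≤ N) :
    ‖x‖ ^ (-s) * a ≤ (Metric.ball (0 : E) 1).indicator (fun x => ‖x‖ ^ (-s)) x * N + a := by
  by_cases hx : x ∈ Metric.ball (0 : E) 1
  · rw [Set.indicator_of_mem hx]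
    linarith [mul_le_mul_of_nonneg_left haN (Real.rpow_nonneg (norm_nonneg x) (-s))]
  · have hx1 : 1 ≤ ‖x‖ := by simpa using hx
    rw [Set.indicator_of_notMem hx, zero_mul, zero_add]
    exact mul_le_of_le_one_left ha (Real.rpow_le_one_of_one_le_of_nonpos hx1 (neg_nonpos.mpr hs))

variable {E F : Type*} [NormedAddCommGroup E] [NormedSpace ℝ E] [FiniteDimensional ℝ E]
  [Nontrivial E] [MeasurableSpace E] [BorelSpace E] {μ : Measure E} [μ.IsAddHaarMeasure]
  [NormedAddCommGroup F] {f : E → F} {s N : ℝ}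

theorem integrableOn_ball_norm_rpow_neg (hs : s < Module.finrank ℝ E) :
    IntegrableOn (fun x : E => ‖x‖ ^ (-s)) (Metric.ball 0 1) μ := by
  refine (integrableOn_fun_norm_addHaar (f := fun r => r ^ (-s)) μ).mpr ?_
  refine IntegrableOn.congr_fun ?_
    (fun r hr => (pow_pred_mul_rpow_neg Module.finrank_pos hr.1).symm) measurableSet_Ioo
  exact (intervalIntegral.integrableOn_Ioo_rpow_iff one_pos).mpr (by linarith)

theorem setIntegral_ball_norm_rpow_neg (hs : s < Module.finrank ℝ E) :
    ∫ x in Metric.ball (0 : E) 1, ‖x‖ ^ (-s) ∂μ =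
      Module.finrank ℝ E * μ.real (Metric.ball 0 1) / (Module.finrank ℝ E - s) := by
  have hball (x : E) : (Metric.ball (0 : E) 1).indicator (fun x => ‖x‖ ^ (-s)) x =
      (Set.Iio 1).indicator (fun r => r ^ (-s)) ‖x‖ := by simp [Set.indicator]
  have hradial : ∫ r in Set.Ioi (0 : ℝ),
      r ^ (Module.finrank ℝ E - 1) • (Set.Iio 1).indicator (fun r => r ^ (-s)) r =
        (Module.finrank ℝ E - s)⁻¹ := calc
    _ = ∫ r in Set.Ioi (0 : ℝ),
          (Set.Iio 1).indicator (fun r : ℝ => r ^ (Module.finrank ℝ E - 1 - s)) r := by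
        refine setIntegral_congr_fun measurableSet_Ioi fun r hr => ?_
        simp only [Set.indicator, smul_eq_mul, mul_ite, mul_zero,
          pow_pred_mul_rpow_neg Module.finrank_pos hr]
    _ = ∫ r in (0 : ℝ)..1, r ^ (Module.finrank ℝ E - 1 - s) := by
        rw [setIntegral_indicator measurableSet_Iio, Set.Ioi_inter_Iio,
          ← integral_Ioc_eq_integral_Ioo, intervalIntegral.integral_of_le zero_le_one]
    _ = _ := by
        have hexp : (Module.finrank ℝ E - 1 - s : ℝ) + 1 = Module.finrank ℝ E - s := by ring
        have hpos : (0 : ℝ) < Module.finrank ℝ E - s := sub_pos.mpr hs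
        rw [integral_rpow (Or.inl (by linarith)), hexp, Real.one_rpow, Real.zero_rpow hpos.ne',
          sub_zero, one_div]
  rw [← integral_indicator measurableSet_ball, integral_congr_ae (ae_of_all _ hball),
    integral_fun_norm_addHaar, hradial, nsmul_eq_mul, smul_eq_mul, div_eq_mul_inv, mul_assoc]

namespace L1SupBound

theorem integrable_indicator_ball_mul_add (hf : L1SupBound f N μ) (hs : s < Module.finrank ℝ E)
    (x : E) :
    Integrable (fun y =>
      (Metric.ball (0 : E) 1).indicator (fun x => ‖x‖ ^ (-s)) (x - y) * N + ‖f y‖) μ :=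
  ((((integrableOn_ball_norm_rpow_neg hs).integrable_indicator measurableSet_ball).comp_sub_left
    x).mul_const N).add hf.integrable.norm

theorem integrable_norm_sub_rpow_neg_mul (hf : L1SupBound f N μ) (hs₀ : 0 ≤ s)
    (hs : s < Module.finrank ℝ E) (x : E) :
    Integrable (fun y => ‖x - y‖ ^ (-s) * ‖f y‖) μ := by
  refine (hf.integrable_indicator_ball_mul_add hs x).mono' ?_ (ae_of_all _ fun y => ?_)
  · have hmeas : Measurable fun y => ‖x - y‖ ^ (-s) := by fun_prop
    exact hmeas.aestronglyMeasurable.mul hf.integrable.norm.aestronglyMeasurable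
  · rw [Real.norm_of_nonneg (by positivity)]
    exact rpow_neg_mul_le_indicator_ball_mul_add hs₀ (norm_nonneg _) (hf.norm_le y)

theorem integral_norm_sub_rpow_neg_mul_le (hf : L1SupBound f N μ) (hs₀ : 0 ≤ s)
    (hs : s < Module.finrank ℝ E) (x : E) :
    ∫ y, ‖x - y‖ ^ (-s) * ‖f y‖ ∂μ ≤
      (Module.finrank ℝ E * μ.real (Metric.ball 0 1) / (Module.finrank ℝ E - s) + 1) * N := by
  set κ : E → ℝ := (Metric.ball (0 : E) 1).indicator fun x => ‖x‖ ^ (-s)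
  have hκ : Integrable κ μ :=
    (integrableOn_ball_norm_rpow_neg hs).integrable_indicator measurableSet_ball
  calc ∫ y, ‖x - y‖ ^ (-s) * ‖f y‖ ∂μ
      ≤ ∫ y, (κ (x - y) * N + ‖f y‖) ∂μ :=
        integral_mono (hf.integrable_norm_sub_rpow_neg_mul hs₀ hs x)
          (hf.integrable_indicator_ball_mul_add hs x) fun y =>
            rpow_neg_mul_le_indicator_ball_mul_add hs₀ (norm_nonneg _) (hf.norm_le y)
    _ = (∫ y, κ y ∂μ) * N + ∫ y, ‖f y‖ ∂μ := by
        rw [integral_add ((hκ.comp_sub_left x).mul_const N) hf.integrable.norm,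
          integral_mul_const, integral_sub_left_eq_self]
    _ ≤ (∫ y, κ y ∂μ) * N + N := by gcongr; exact hf.integral_norm_le
    _ = _ := by
        rw [integral_indicator measurableSet_ball, setIntegral_ball_norm_rpow_neg hs]; ring

end L1SupBound

end RieszPotential

section CauchyTransform

variable {h g : ℂ → ℂ} {M N α s : ℝ}

theorem L1SupBound.inv_pi_mul_integral_le (hh : L1SupBound h N) (hs₀ : 0 ≤ s) (hs : s < 2)
    (z : ℂ) : Real.pi⁻¹ * ∫ w, ‖z - w‖ ^ (-s) * ‖h w‖ ≤ (2 / (2 - s) + 1) * N := by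
  have hN := hh.nonneg
  have hint := hh.integral_norm_sub_rpow_neg_mul_le hs₀
    (by rw [Complex.finrank_real_complex]; exact_mod_cast hs) z
  have hball : volume.real (Metric.ball (0 : ℂ) 1) = Real.pi := by simp [Measure.real]
  have hpi : Real.pi⁻¹ ≤ 1 := inv_le_one_of_one_le₀ (by linarith [Real.pi_gt_three])
  rw [Complex.finrank_real_complex, hball] at hint
  calc Real.pi⁻¹ * ∫ w, ‖z - w‖ ^ (-s) * ‖h w‖
      ≤ Real.pi⁻¹ * (((2 : ℕ) * Real.pi / ((2 : ℕ) - s) + 1) * N) := by gcongr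
    _ = (2 / (2 - s) + Real.pi⁻¹) * N := by push_cast; field_simp
    _ ≤ (2 / (2 - s) + 1) * N := by gcongr

theorem L1SupBound.integrable_div_sub (hh : L1SupBound h N) (z : ℂ) :
    Integrable fun w => h w / (z - w) := by
  refine (hh.integrable_norm_sub_rpow_neg_mul (s := 1) zero_le_one
    (by simp [Complex.finrank_real_complex]) z).mono' ?_ (ae_of_all _ fun w => ?_)
  · exact hh.integrable.aestronglyMeasurable.div₀ (by fun_prop)
  · rw [norm_div, Real.rpow_neg_one, div_eq_inv_mul]

theorem norm_inv_pi_mul_integral_le {f : ℂ → ℂ} {κ : ℂ → ℝ} (hκ : Integrable κ)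
    (hf : ∀ᵐ w, ‖f w‖ ≤ κ w) : ‖(Real.pi : ℂ)⁻¹ * ∫ w, f w‖ ≤ Real.pi⁻¹ * ∫ w, κ w := by
  rw [norm_mul, norm_inv, Complex.norm_real, Real.norm_of_nonneg Real.pi_nonneg]
  exact mul_le_mul_of_nonneg_left (norm_integral_le_of_norm_le hκ hf)
    (inv_nonneg.mpr Real.pi_nonneg)

theorem L1SupBound.norm_dbarInv_le (hh : L1SupBound h N) (z : ℂ) : ‖dbarInv h z‖ ≤ 3 * N := by
  have hκ := hh.integrable_norm_sub_rpow_neg_mul (s := 1) zero_le_one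
    (by simp [Complex.finrank_real_complex]) z
  calc ‖dbarInv h z‖ ≤ Real.pi⁻¹ * ∫ w, ‖z - w‖ ^ (-1 : ℝ) * ‖h w‖ :=
        norm_inv_pi_mul_integral_le hκ <| ae_of_all _ fun w => by
          rw [norm_div, Real.rpow_neg_one, div_eq_inv_mul]
    _ ≤ (2 / (2 - 1) + 1) * N := hh.inv_pi_mul_integral_le zero_le_one one_lt_two z
    _ = 3 * N := by ring

theorem L1SupBound.dbarInv_add (hg : L1SupBound g M) (hh : L1SupBound h N) (z : ℂ) :
    dbarInv (fun w => g w + h w) z = dbarInv g z + dbarInv h z := by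
  simp only [dbarInv, add_div]
  rw [integral_add (hg.integrable_div_sub z) (hh.integrable_div_sub z), mul_add]

theorem norm_inv_sub_inv_le_of_norm_le {𝕜 : Type*} [NormedField 𝕜] {a b : 𝕜} (ha : a ≠ 0)
    (hab : ‖a‖ ≤ ‖b‖) (hα₀ : 0 ≤ α) (hα₁ : α ≤ 1) :
    ‖a⁻¹ - b⁻¹‖ ≤ 2 * ‖a - b‖ ^ α * ‖a‖ ^ (-(1 + α)) := by
  have ha₀ : 0 < ‖a‖ := norm_pos_iff.mpr ha
  have hb₀ : 0 < ‖b‖ := ha₀.trans_le hab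
  have hb : b ≠ 0 := norm_pos_iff.mp hb₀
  have hdist : ‖a - b‖ ≤ 2 * ‖b‖ := (norm_sub_le a b).trans (by linarith)
  have hsplit : ‖a - b‖ ≤ ‖a - b‖ ^ α * (2 * ‖b‖) ^ (1 - α) := calc
    ‖a - b‖ = ‖a - b‖ ^ α * ‖a - b‖ ^ (1 - α) := by
      rw [← Real.rpow_add_of_nonneg (norm_nonneg _) hα₀ (sub_nonneg.mpr hα₁),
        add_sub_cancel, Real.rpow_one]
    _ ≤ _ := by gcongr
  have htwo : (2 : ℝ) ^ (1 - α) ≤ 2 := by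
    simpa using Real.rpow_le_rpow_of_exponent_le one_le_two (sub_le_self 1 hα₀)
  have hneg : ‖b‖ ^ (-α) ≤ ‖a‖ ^ (-α) :=
    Real.rpow_le_rpow_of_nonpos ha₀ hab (neg_nonpos.mpr hα₀)
  calc ‖a⁻¹ - b⁻¹‖ = ‖a - b‖ * (‖a‖⁻¹ * ‖b‖⁻¹) := by
        rw [inv_sub_inv ha hb, norm_div, norm_mul, norm_sub_rev, div_eq_mul_inv, mul_inv]
    _ ≤ ‖a - b‖ ^ α * (2 * ‖b‖) ^ (1 - α) * (‖a‖⁻¹ * ‖b‖⁻¹) := by gcongr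
    _ = ‖a - b‖ ^ α * 2 ^ (1 - α) * (‖a‖⁻¹ * ‖b‖ ^ (-α)) := by
        rw [Real.mul_rpow zero_le_two hb₀.le, sub_eq_neg_add (1 : ℝ) α,
          Real.rpow_add hb₀, Real.rpow_one]
        field_simp
    _ ≤ ‖a - b‖ ^ α * 2 * (‖a‖⁻¹ * ‖a‖ ^ (-α)) := by gcongr
    _ = 2 * ‖a - b‖ ^ α * ‖a‖ ^ (-(1 + α)) := by
        rw [neg_add, Real.rpow_add ha₀, Real.rpow_neg_one]; ring

theorem norm_inv_sub_inv_le {𝕜 : Type*} [NormedField 𝕜] {a b : 𝕜} (ha : a ≠ 0) (hb : b ≠ 0)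
    (hα₀ : 0 ≤ α) (hα₁ : α ≤ 1) :
    ‖a⁻¹ - b⁻¹‖ ≤ 2 * ‖a - b‖ ^ α * (‖a‖ ^ (-(1 + α)) + ‖b‖ ^ (-(1 + α))) := by
  rw [mul_add]
  rcases le_total ‖a‖ ‖b‖ with hab | hba
  · exact (norm_inv_sub_inv_le_of_norm_le ha hab hα₀ hα₁).trans
      (le_add_of_nonneg_right (by positivity))
  · rw [norm_sub_rev a⁻¹, norm_sub_rev a]
    exact (norm_inv_sub_inv_le_of_norm_le hb hba hα₀ hα₁).trans
      (le_add_of_nonneg_left (by positivity))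

theorem L1SupBound.norm_dbarInv_sub_le (hh : L1SupBound h N) (hα₀ : 0 ≤ α) (hα₁ : α < 1)
    (z z' : ℂ) :
    ‖dbarInv h z - dbarInv h z'‖ ≤ 4 * (2 / (1 - α) + 1) * N * ‖z - z'‖ ^ α := by
  have hκ := hh.integrable_norm_sub_rpow_neg_mul (s := 1 + α) (by linarith)
    (by rw [Complex.finrank_real_complex]; push_cast; linarith)
  have hpi := hh.inv_pi_mul_integral_le (s := 1 + α) (by linarith) (by linarith)
  have hpt : ∀ᵐ w, ‖h w / (z - w) - h w / (z' - w)‖ ≤ 2 * ‖z - z'‖ ^ α *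
      (‖z - w‖ ^ (-(1 + α)) * ‖h w‖ + ‖z' - w‖ ^ (-(1 + α)) * ‖h w‖) := by
    filter_upwards [Measure.ae_ne volume z, Measure.ae_ne volume z'] with w hz hz'
    have hker := norm_inv_sub_inv_le (sub_ne_zero.mpr hz.symm) (sub_ne_zero.mpr hz'.symm)
      hα₀ hα₁.le
    rw [sub_sub_sub_cancel_right] at hker
    calc ‖h w / (z - w) - h w / (z' - w)‖ = ‖(z - w)⁻¹ - (z' - w)⁻¹‖ * ‖h w‖ := by
          rw [← norm_mul, sub_mul, div_eq_inv_mul, div_eq_inv_mul]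
      _ ≤ _ := mul_le_mul_of_nonneg_right hker (norm_nonneg _)
      _ = _ := by ring
  calc ‖dbarInv h z - dbarInv h z'‖
      = ‖(Real.pi : ℂ)⁻¹ * ∫ w, (h w / (z - w) - h w / (z' - w))‖ := by
        rw [dbarInv, dbarInv, ← mul_sub,
          integral_sub (hh.integrable_div_sub z) (hh.integrable_div_sub z')]
    _ ≤ Real.pi⁻¹ * ∫ w, 2 * ‖z - z'‖ ^ α *
          (‖z - w‖ ^ (-(1 + α)) * ‖h w‖ + ‖z' - w‖ ^ (-(1 + α)) * ‖h w‖) :=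
        norm_inv_pi_mul_integral_le (((hκ z).add (hκ z')).const_mul _) hpt
    _ = 2 * ‖z - z'‖ ^ α * (Real.pi⁻¹ * (∫ w, ‖z - w‖ ^ (-(1 + α)) * ‖h w‖) +
          Real.pi⁻¹ * ∫ w, ‖z' - w‖ ^ (-(1 + α)) * ‖h w‖) := by
        rw [integral_const_mul, integral_add (hκ z) (hκ z')]; ring
    _ ≤ 2 * ‖z - z'‖ ^ α * ((2 / (2 - (1 + α)) + 1) * N + (2 / (2 - (1 + α)) + 1) * N) := by
        exact mul_le_mul_of_nonneg_left (add_le_add (hpi z) (hpi z')) (by positivity)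
    _ = 4 * (2 / (1 - α) + 1) * N * ‖z - z'‖ ^ α := by ring

theorem L1SupBound.continuous_dbarInv (hh : L1SupBound h N) : Continuous (dbarInv h) := by
  refine continuous_iff_continuousAt.mpr fun z => tendsto_iff_norm_sub_tendsto_zero.mpr ?_
  refine squeeze_zero (fun _ => norm_nonneg _)
    (fun z' => hh.norm_dbarInv_sub_le (α := 1 / 2) (by norm_num) (by norm_num) z' z) ?_
  have hcont : Continuous fun z' => 4 * (2 / (1 - 1 / 2) + 1) * N * ‖z' - z‖ ^ (1 / 2 : ℝ) :=
    continuous_const.mul ((by fun_prop : Continuous fun z' => ‖z' - z‖).rpow_const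
      fun _ => Or.inr (by norm_num))
  simpa using hcont.tendsto z

end CauchyTransform

section Zygmund

/-- The kernel `r² / (‖x‖ (r² + ‖x‖²))`, of size `1 / ‖x‖` for `‖x‖ ≤ r` and `r² / ‖x‖³` beyond,
by which the second differences with step size `r` of the Cauchy kernel `1 / x` are controlled. -/
noncomputable def zygmundMajorant (r : ℝ) (x : ℂ) : ℝ := r ^ 2 / (‖x‖ * (r ^ 2 + ‖x‖ ^ 2))

variable {h : ℂ → ℂ} {N r : ℝ} {x τ : ℂ}

theorem zygmundMajorant_nonneg (r : ℝ) (x : ℂ) :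
    0 ≤ zygmundMajorant r x := by unfold zygmundMajorant; positivity

theorem pow_mul_zygmundMajorant_eq (hr : 0 < r) {ρ : ℝ} (hρ : 0 < ρ) :
    ρ ^ (Module.finrank ℝ ℂ - 1) • (r ^ 2 / (ρ * (r ^ 2 + ρ ^ 2))) = (1 + (r⁻¹ * ρ) ^ 2)⁻¹ := by
  rw [Complex.finrank_real_complex, Nat.add_one_sub_one, pow_one, smul_eq_mul]
  field_simp

theorem integrable_zygmundMajorant (hr : 0 < r) : Integrable (zygmundMajorant r) := by
  refine (integrable_fun_norm_addHaar (f := fun ρ => r ^ 2 / (ρ * (r ^ 2 + ρ ^ 2))) volume).mpr ?_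
  refine IntegrableOn.congr_fun ?_ (fun ρ hρ => (pow_mul_zygmundMajorant_eq hr hρ).symm)
    measurableSet_Ioi
  exact (integrable_inv_one_add_sq.comp_mul_left' (inv_ne_zero hr.ne')).integrableOn

theorem integral_zygmundMajorant (hr : 0 < r) :
    ∫ x : ℂ, zygmundMajorant r x = Real.pi ^ 2 * r := by
  have hball : volume.real (Metric.ball (0 : ℂ) 1) = Real.pi := by simp [Measure.real]
  have hradial : ∫ ρ in Set.Ioi (0 : ℝ), (1 + (r⁻¹ * ρ) ^ 2)⁻¹ = r * (Real.pi / 2) := by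
    rw [integral_comp_mul_left_Ioi (fun ρ => (1 + ρ ^ 2)⁻¹) 0 (inv_pos.mpr hr), mul_zero,
      integral_Ioi_inv_one_add_sq, Real.arctan_zero, sub_zero, inv_inv, smul_eq_mul]
  calc ∫ x : ℂ, zygmundMajorant r x
      = Module.finrank ℝ ℂ • volume.real (Metric.ball (0 : ℂ) 1) • ∫ ρ in Set.Ioi (0 : ℝ),
          ρ ^ (Module.finrank ℝ ℂ - 1) • (r ^ 2 / (ρ * (r ^ 2 + ρ ^ 2))) :=
        integral_fun_norm_addHaar volume fun ρ => r ^ 2 / (ρ * (r ^ 2 + ρ ^ 2))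
    _ = 2 * (Real.pi * (r * (Real.pi / 2))) := by
        rw [setIntegral_congr_fun measurableSet_Ioi fun ρ hρ => pow_mul_zygmundMajorant_eq hr hρ,
          hradial, hball, Complex.finrank_real_complex, nsmul_eq_mul, smul_eq_mul, Nat.cast_ofNat]
    _ = Real.pi ^ 2 * r := by ring

theorem sq_div_mul_le_of_le {a b c : ℝ} (ha : 0 < a) (hr : 0 ≤ r) (hab : a ≤ b) (hac : a ≤ c)
    (hrab : r ≤ a + b) (hrac : r ≤ a + c) :
    r ^ 2 / (a * b * c) ≤ 5 * (r ^ 2 / (a * (r ^ 2 + a ^ 2))) := by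
  have hr_sq : r * r ≤ 2 * b * (2 * c) :=
    mul_le_mul (by linarith) (by linarith) hr (by linarith)
  have ha_sq : a * a ≤ b * c := mul_le_mul hab hac ha.le (by linarith)
  have hden : a * (r ^ 2 + a ^ 2) ≤ 5 * (a * b * c) := by
    calc a * (r ^ 2 + a ^ 2) ≤ a * (5 * (b * c)) := by gcongr; linarith
      _ = 5 * (a * b * c) := by ring
  calc r ^ 2 / (a * b * c) = 5 * (r ^ 2 / (5 * (a * b * c))) := by ring
    _ ≤ 5 * (r ^ 2 / (a * (r ^ 2 + a ^ 2))) := by gcongr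

theorem norm_sq_div_mul_le_zygmundMajorant (hx : x ≠ 0) (hadd : x + τ ≠ 0) (hsub : x - τ ≠ 0) :
    ‖τ‖ ^ 2 / (‖x‖ * ‖x + τ‖ * ‖x - τ‖) ≤ 5 * (zygmundMajorant ‖τ‖ x +
      zygmundMajorant ‖τ‖ (x + τ) + zygmundMajorant ‖τ‖ (x - τ)) := by
  have hx_add : ‖τ‖ ≤ ‖x‖ + ‖x + τ‖ := by simpa [add_comm] using norm_sub_le (x + τ) x
  have hx_sub : ‖τ‖ ≤ ‖x‖ + ‖x - τ‖ := by simpa using norm_sub_le x (x - τ)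
  have hadd_sub : ‖τ‖ ≤ ‖x + τ‖ + ‖x - τ‖ := by
    have htwo : ‖(x + τ) - (x - τ)‖ = 2 * ‖τ‖ := by
      rw [add_sub_sub_cancel, ← two_mul, norm_mul, Complex.norm_ofNat]
    linarith [norm_sub_le (x + τ) (x - τ), norm_nonneg τ]
  have h₀ := zygmundMajorant_nonneg ‖τ‖ x
  have h₁ := zygmundMajorant_nonneg ‖τ‖ (x + τ)
  have h₂ := zygmundMajorant_nonneg ‖τ‖ (x - τ)
  unfold zygmundMajorant at *
  rcases le_total ‖x‖ ‖x + τ‖ with h01 | h10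
  · rcases le_total ‖x‖ ‖x - τ‖ with h02 | h20
    · linarith [sq_div_mul_le_of_le (norm_pos_iff.mpr hx) (norm_nonneg τ) h01 h02 hx_add hx_sub]
    · rw [mul_comm, ← mul_assoc]
      linarith [sq_div_mul_le_of_le (norm_pos_iff.mpr hsub) (norm_nonneg τ) h20 (h20.trans h01)
        (by linarith) (by linarith)]
  · rcases le_total ‖x + τ‖ ‖x - τ‖ with h12 | h21
    · rw [mul_comm ‖x‖]
      linarith [sq_div_mul_le_of_le (norm_pos_iff.mpr hadd) (norm_nonneg τ) h10 h12
        (by linarith) hadd_sub]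
    · rw [mul_comm, ← mul_assoc]
      linarith [sq_div_mul_le_of_le (norm_pos_iff.mpr hsub) (norm_nonneg τ) (h21.trans h10) h21
        (by linarith) (by linarith)]

theorem norm_inv_add_inv_sub_two_mul_inv_le (hx : x ≠ 0) (hadd : x + τ ≠ 0) (hsub : x - τ ≠ 0) :
    ‖(x + τ)⁻¹ + (x - τ)⁻¹ - 2 * x⁻¹‖ ≤ 10 * (zygmundMajorant ‖τ‖ x +
      zygmundMajorant ‖τ‖ (x + τ) + zygmundMajorant ‖τ‖ (x - τ)) := by
  have hid : (x + τ)⁻¹ + (x - τ)⁻¹ - 2 * x⁻¹ = 2 * (τ ^ 2 / (x * (x + τ) * (x - τ))) := by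
    field_simp
    ring
  rw [hid, norm_mul, norm_div, norm_mul, norm_mul, norm_pow, Complex.norm_ofNat]
  linarith [norm_sq_div_mul_le_zygmundMajorant hx hadd hsub]

theorem norm_div_add_div_sub_two_mul_div_le {a z w : ℂ} (ha : ‖a‖ ≤ N) (hw : w ≠ z)
    (hadd : w ≠ z + τ) (hsub : w ≠ z - τ) :
    ‖a / (z + τ - w) + a / (z - τ - w) - 2 * (a / (z - w))‖ ≤
      10 * N * (zygmundMajorant ‖τ‖ (z - w) + zygmundMajorant ‖τ‖ (z + τ - w) +
        zygmundMajorant ‖τ‖ (z - τ - w)) := by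
  rw [add_sub_right_comm z τ, sub_right_comm z τ]
  have hker := norm_inv_add_inv_sub_two_mul_inv_le (x := z - w) (τ := τ)
    (sub_ne_zero.mpr hw.symm) (by rwa [← add_sub_right_comm, sub_ne_zero, ne_comm])
    (by rwa [sub_right_comm, sub_ne_zero, ne_comm])
  calc _ = ‖a‖ * ‖(z - w + τ)⁻¹ + (z - w - τ)⁻¹ - 2 * (z - w)⁻¹‖ := by
        rw [← norm_mul]; congr 1; ring
    _ ≤ N * _ := mul_le_mul ha hker (norm_nonneg _) ((norm_nonneg a).trans ha)
    _ = _ := by ring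

theorem L1SupBound.norm_dbarInv_add_add_dbarInv_sub_sub_le (hh : L1SupBound h N) (hτ : τ ≠ 0)
    (z : ℂ) :
    ‖dbarInv h (z + τ) + dbarInv h (z - τ) - 2 * dbarInv h z‖ ≤ 30 * Real.pi * N * ‖τ‖ := by
  have hr : 0 < ‖τ‖ := norm_pos_iff.mpr hτ
  have hκ (z : ℂ) : Integrable fun w => zygmundMajorant ‖τ‖ (z - w) :=
    (integrable_zygmundMajorant hr).comp_sub_left z
  have hκ_integral (z : ℂ) : ∫ w, zygmundMajorant ‖τ‖ (z - w) = Real.pi ^ 2 * ‖τ‖ := by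
    rw [integral_sub_left_eq_self (zygmundMajorant ‖τ‖), integral_zygmundMajorant hr]
  have hκ_add : Integrable fun w =>
      zygmundMajorant ‖τ‖ (z - w) + zygmundMajorant ‖τ‖ (z + τ - w) := (hκ z).add (hκ (z + τ))
  have hh_add : Integrable fun w => h w / (z + τ - w) + h w / (z - τ - w) :=
    (hh.integrable_div_sub _).add (hh.integrable_div_sub _)
  calc ‖dbarInv h (z + τ) + dbarInv h (z - τ) - 2 * dbarInv h z‖
      = ‖(Real.pi : ℂ)⁻¹ *
          ∫ w, (h w / (z + τ - w) + h w / (z - τ - w) - 2 * (h w / (z - w)))‖ := by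
        rw [integral_sub hh_add ((hh.integrable_div_sub z).const_mul 2),
          integral_add (hh.integrable_div_sub _) (hh.integrable_div_sub _), integral_const_mul,
          dbarInv, dbarInv, dbarInv]
        congr 1; ring
    _ ≤ Real.pi⁻¹ * ∫ w, 10 * N * (zygmundMajorant ‖τ‖ (z - w) +
          zygmundMajorant ‖τ‖ (z + τ - w) + zygmundMajorant ‖τ‖ (z - τ - w)) := by
        refine norm_inv_pi_mul_integral_le ((hκ_add.add (hκ (z - τ))).const_mul (10 * N)) ?_
        filter_upwards [Measure.ae_ne volume z, Measure.ae_ne volume (z + τ),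
          Measure.ae_ne volume (z - τ)] with w using
          norm_div_add_div_sub_two_mul_div_le (hh.norm_le w)
    _ = Real.pi⁻¹ * (10 * N * (Real.pi ^ 2 * ‖τ‖ + Real.pi ^ 2 * ‖τ‖ + Real.pi ^ 2 * ‖τ‖)) := by
        rw [integral_const_mul, integral_add hκ_add (hκ (z - τ)),
          integral_add (hκ z) (hκ (z + τ)), hκ_integral, hκ_integral, hκ_integral]
    _ = 30 * Real.pi * N * ‖τ‖ := by field_simp; ring

end Zygmund

section Oscillation

variable {h : ℂ → ℂ} {k τ : ℂ} {N δ : ℝ}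

theorem norm_ek (k z : ℂ) : ‖ek k z‖ = 1 := by
  have hreal : conj k * z + k * conj z = ((2 * (conj k * z).re : ℝ) : ℂ) := by
    rw [← Complex.add_conj, map_mul, Complex.conj_conj]
  rw [ek, hreal, mul_div_assoc, ← Complex.ofReal_ofNat, ← Complex.ofReal_div, mul_comm,
    Complex.norm_exp_ofReal_mul_I]

theorem continuous_ek (k : ℂ) : Continuous (ek k) := by unfold ek; fun_prop

theorem ek_add (k z w : ℂ) : ek k (z + w) = ek k z * ek k w := by
  rw [ek, ek, ek, ← Complex.exp_add, map_add]
  congr 1; ring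

theorem ek_pi_div_conj (hk : k ≠ 0) : ek k (Real.pi / conj k) = -1 := by
  have hk' : conj k ≠ 0 := (map_ne_zero _).mpr hk
  rw [ek, map_div₀, Complex.conj_conj, Complex.conj_ofReal, mul_div_cancel₀ _ hk',
    mul_div_cancel₀ _ hk, ← two_mul, mul_div_assoc, mul_div_cancel_left₀ _ two_ne_zero, mul_comm,
    Complex.exp_pi_mul_I]

theorem L1SupBound.ek_mul (hh : L1SupBound h N) (k : ℂ) : L1SupBound (fun w => ek k w * h w) N :=
  hh.of_norm_le ((continuous_ek k).aestronglyMeasurable.mul hh.integrable.aestronglyMeasurable)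
    fun w => by rw [norm_mul, norm_ek, one_mul]

theorem dbarInv_comp_add_right (h : ℂ → ℂ) (τ z : ℂ) :
    dbarInv (fun w => h (w + τ)) z = dbarInv h (z + τ) := by
  rw [dbarInv, dbarInv, ← integral_add_right_eq_self (fun w => h w / (z + τ - w)) τ]
  simp only [add_sub_add_right_eq_sub]

theorem L1SupBound.norm_dbarInv_ek_mul_add_dbarInv_le (hh : L1SupBound h N)
    (hδ : L1SupBound (fun w => h (w + τ) - h w) δ) (hτ : ek k τ = -1) (z : ℂ) :
    ‖dbarInv (fun w => ek k w * h w) z + dbarInv (fun w => ek k w * h w) (z + τ)‖ ≤ 3 * δ := by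
  have hcancel (w : ℂ) :
      ek k w * h w + ek k (w + τ) * h (w + τ) = ek k w * -(h (w + τ) - h w) := by
    rw [ek_add, hτ]; ring
  have hδ' : L1SupBound (fun w => -(h (w + τ) - h w)) δ :=
    hδ.of_norm_le hδ.integrable.neg.aestronglyMeasurable fun w => (norm_neg _).le
  rw [← dbarInv_comp_add_right,
    ← (hh.ek_mul k).dbarInv_add ((hh.ek_mul k).comp_add_right τ), funext hcancel]
  exact (hδ'.ek_mul k).norm_dbarInv_le z

theorem L1SupBound.norm_dbarInv_ek_mul_le (hh : L1SupBound h N)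
    (hδ : L1SupBound (fun w => h (w + τ) - h w) δ) (hτ : ek k τ = -1) (z : ℂ) :
    ‖dbarInv (fun w => ek k w * h w) z‖ ≤ 24 * N * ‖τ‖ + 2 * δ := by
  have hτ₀ : τ ≠ 0 := by
    rintro rfl
    norm_num [ek] at hτ
  set U := dbarInv fun w => ek k w * h w
  have hzyg := (hh.ek_mul k).norm_dbarInv_add_add_dbarInv_sub_sub_le hτ₀ z
  have hright := hh.norm_dbarInv_ek_mul_add_dbarInv_le hδ hτ z
  have hleft := hh.norm_dbarInv_ek_mul_add_dbarInv_le hδ hτ (z - τ)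
  rw [sub_add_cancel] at hleft
  have hfour : 4 * ‖U z‖ ≤ 3 * δ + 3 * δ + 30 * Real.pi * N * ‖τ‖ := calc
    4 * ‖U z‖ = ‖(U z + U (z + τ)) + (U (z - τ) + U z) -
        (U (z + τ) + U (z - τ) - 2 * U z)‖ := by
      rw [← Complex.norm_ofNat 4, ← norm_mul]; congr 1; ring
    _ ≤ _ := (norm_sub_le _ _).trans
      (add_le_add ((norm_add_le _ _).trans (add_le_add hright hleft)) hzyg)
  have hpi : 30 * Real.pi * (N * ‖τ‖) ≤ 96 * (N * ‖τ‖) :=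
    mul_le_mul_of_nonneg_right (by linarith [Real.pi_lt_d2])
      (mul_nonneg hh.nonneg (norm_nonneg τ))
  linarith [hδ.nonneg]

end Oscillation

section Scattering

/-- The conjugate-linear operator `F ↦ ∂̄⁻¹[e_{-k} q conj F]`, in terms of which the scattering
system reads `u₁ = 1 + T u₂`, `u₂ = T u₁`. -/
noncomputable def scatteringOp (q : ℂ → ℂ) (k : ℂ) (F : ℂ → ℂ) : ℂ → ℂ :=
  dbarInv fun w => ek (-k) w * q w * conj (F w)

variable {q F G : ℂ → ℂ} {k τ : ℂ} {A B m ω : ℝ}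

theorem L1SupBound.mul_conj (hq : L1SupBound q A) (hF : AEStronglyMeasurable F)
    (hFm : ∀ w, ‖F w‖ ≤ m) : L1SupBound (fun w => q w * conj (F w)) (m * A) :=
  hq.of_norm_le_mul (hq.integrable.aestronglyMeasurable.mul
    (Complex.continuous_conj.comp_aestronglyMeasurable hF)) ((norm_nonneg _).trans (hFm 0))
    fun w => by
      rw [norm_mul, RCLike.norm_conj, mul_comm]
      exact mul_le_mul_of_nonneg_right (hFm w) (norm_nonneg _)

theorem L1SupBound.ek_mul_mul_conj (hq : L1SupBound q A) (hF : AEStronglyMeasurable F)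
    (hFm : ∀ w, ‖F w‖ ≤ m) (k : ℂ) :
    L1SupBound (fun w => ek k w * q w * conj (F w)) (m * A) := by
  simpa only [mul_assoc] using (hq.mul_conj hF hFm).ek_mul k

theorem L1SupBound.norm_scatteringOp_le (hq : L1SupBound q A) (hF : AEStronglyMeasurable F)
    (hFm : ∀ w, ‖F w‖ ≤ m) (k z : ℂ) : ‖scatteringOp q k F z‖ ≤ 3 * A * m :=
  ((hq.ek_mul_mul_conj hF hFm (-k)).norm_dbarInv_le z).trans_eq (by ring)

theorem L1SupBound.continuous_scatteringOp (hq : L1SupBound q A) (hF : AEStronglyMeasurable F)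
    (hFm : ∀ w, ‖F w‖ ≤ m) (k : ℂ) : Continuous (scatteringOp q k F) :=
  (hq.ek_mul_mul_conj hF hFm (-k)).continuous_dbarInv

theorem L1SupBound.norm_scatteringOp_sub_le (hq : L1SupBound q A) (hF : AEStronglyMeasurable F)
    (hFm : ∀ w, ‖F w‖ ≤ m) (k z z' : ℂ) :
    ‖scatteringOp q k F z - scatteringOp q k F z'‖ ≤
      20 * A * m * ‖z - z'‖ ^ (1 / 2 : ℝ) :=
  ((hq.ek_mul_mul_conj hF hFm (-k)).norm_dbarInv_sub_le (α := 1 / 2) (by norm_num) (by norm_num)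
    z z').trans_eq (by ring)

theorem L1SupBound.scatteringOp_add {m₁ m₂ : ℝ} (hq : L1SupBound q A)
    (hF : AEStronglyMeasurable F) (hFm : ∀ w, ‖F w‖ ≤ m₁) (hG : AEStronglyMeasurable G)
    (hGm : ∀ w, ‖G w‖ ≤ m₂) (k z : ℂ) :
    scatteringOp q k (fun w => F w + G w) z = scatteringOp q k F z + scatteringOp q k G z := by
  simp only [scatteringOp, map_add, mul_add]
  exact (hq.ek_mul_mul_conj hF hFm (-k)).dbarInv_add (hq.ek_mul_mul_conj hG hGm (-k)) z

theorem L1SupBound.mul_conj_comp_add_right_sub (hq : L1SupBound q A)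
    (hq' : L1SupBound (fun w => q (w + τ) - q w) B) (hF : AEStronglyMeasurable F)
    (hFm : ∀ w, ‖F w‖ ≤ m) (hFω : ∀ w, ‖F (w + τ) - F w‖ ≤ ω) :
    L1SupBound (fun w => q (w + τ) * conj (F (w + τ)) - q w * conj (F w)) (m * B + ω * A) := by
  have hFτ : AEStronglyMeasurable fun w => F (w + τ) :=
    hF.comp_measurePreserving (measurePreserving_add_right volume τ)
  have hsplit (w : ℂ) : q (w + τ) * conj (F (w + τ)) - q w * conj (F w) =
      (q (w + τ) - q w) * conj (F (w + τ)) + q w * conj (F (w + τ) - F w) := by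
    rw [map_sub]; ring
  simp only [hsplit]
  exact (hq'.mul_conj hFτ fun w => hFm (w + τ)).add (hq.mul_conj (hFτ.sub hF) hFω)

theorem L1SupBound.norm_scatteringOp_le_of_norm_comp_add_right_sub_le (hq : L1SupBound q A)
    (hq' : L1SupBound (fun w => q (w + τ) - q w) (‖τ‖ * B)) (hτ : ek (-k) τ = -1)
    (hF : AEStronglyMeasurable F) (hFm : ∀ w, ‖F w‖ ≤ m) (hFω : ∀ w, ‖F (w + τ) - F w‖ ≤ ω)
    (z : ℂ) :
    ‖scatteringOp q k F z‖ ≤ (24 * A + 2 * B) * m * ‖τ‖ + 2 * A * ω := by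
  have hosc := (hq.mul_conj hF hFm).norm_dbarInv_ek_mul_le
    (hq.mul_conj_comp_add_right_sub hq' hF hFm hFω) hτ z
  simp only [scatteringOp, mul_assoc] at hosc ⊢
  linarith

theorem norm_le_of_forall_norm_le_add_half {α E : Type*} [SeminormedAddCommGroup E] {f : α → E}
    {a : ℝ} (hf : IsBounded (Set.range f))
    (h : ∀ m, (∀ x, ‖f x‖ ≤ m) → ∀ x, ‖f x‖ ≤ a + m / 2) (x : α) : ‖f x‖ ≤ 2 * a := by
  obtain ⟨R, hR⟩ := hf.exists_norm_le
  have hbdd : BddAbove (Set.range fun x => ‖f x‖) :=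
    ⟨R, Set.forall_mem_range.mpr fun x => hR _ ⟨x, rfl⟩⟩
  have hx : ‖f x‖ ≤ ⨆ x, ‖f x‖ := le_ciSup hbdd x
  have : Nonempty α := ⟨x⟩
  have hsup : ⨆ x, ‖f x‖ ≤ a + (⨆ x, ‖f x‖) / 2 := ciSup_le (h _ (le_ciSup hbdd))
  linarith

theorem norm_neg_pi_div_conj (k : ℂ) : ‖(Real.pi : ℂ) / conj (-k)‖ = Real.pi / ‖k‖ := by
  rw [norm_div, RCLike.norm_conj, norm_neg, Complex.norm_real, Real.norm_of_nonneg Real.pi_nonneg]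

theorem norm_scatteringOp_one_le (hq : Differentiable ℝ q) (hA : L1SupBound q A)
    (hB : L1SupBound (fderiv ℝ q) B) (hk : k ≠ 0) (z : ℂ) :
    ‖scatteringOp q k (fun _ => 1) z‖ ≤ (24 * A + 2 * B) * (Real.pi / ‖k‖) := by
  have h := hA.norm_scatteringOp_le_of_norm_comp_add_right_sub_le (F := fun _ => 1) (m := 1)
    (ω := 0) (hB.comp_add_right_sub hq _) (ek_pi_div_conj (neg_ne_zero.mpr hk))
    aestronglyMeasurable_const (fun _ => by simp) (fun _ => by simp) z
  rwa [norm_neg_pi_div_conj, mul_one, mul_zero, add_zero] at h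

theorem norm_scatteringOp_scatteringOp_le (hq : Differentiable ℝ q) (hA : L1SupBound q A)
    (hB : L1SupBound (fderiv ℝ q) B) (hk : k ≠ 0) (hF : AEStronglyMeasurable F)
    (hFm : ∀ w, ‖F w‖ ≤ m) (z : ℂ) :
    ‖scatteringOp q k (scatteringOp q k F) z‖ ≤
      ((24 * A + 2 * B) * (3 * A) * (Real.pi / ‖k‖) +
        40 * A ^ 2 * (Real.pi / ‖k‖) ^ (1 / 2 : ℝ)) * m := by
  have h := hA.norm_scatteringOp_le_of_norm_comp_add_right_sub_le (k := k)
    (hB.comp_add_right_sub hq _) (ek_pi_div_conj (neg_ne_zero.mpr hk))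
    (hA.continuous_scatteringOp hF hFm k).aestronglyMeasurable (hA.norm_scatteringOp_le hF hFm k)
    (fun w => (hA.norm_scatteringOp_sub_le hF hFm k (w + _) w).trans_eq
      (by rw [add_sub_cancel_left])) z
  rw [norm_neg_pi_div_conj] at h
  exact h.trans_eq (by ring)

theorem exists_forall_norm_scatteringOp_scatteringOp_le_half (hq : Differentiable ℝ q)
    (hA : L1SupBound q A) (hB : L1SupBound (fderiv ℝ q) B) :
    ∃ K : ℝ, 0 < K ∧ ∀ (k : ℂ) (F : ℂ → ℂ) (m : ℝ), K ≤ ‖k‖ → AEStronglyMeasurable F →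
      (∀ w, ‖F w‖ ≤ m) → ∀ z, ‖scatteringOp q k (scatteringOp q k F) z‖ ≤ m / 2 := by
  have hpi : Tendsto (fun r : ℝ => Real.pi / r) atTop (𝓝 0) :=
    tendsto_const_nhds.div_atTop tendsto_id
  have hlim : Tendsto (fun r : ℝ => (24 * A + 2 * B) * (3 * A) * (Real.pi / r) +
      40 * A ^ 2 * (Real.pi / r) ^ (1 / 2 : ℝ)) atTop (𝓝 0) := by
    simpa using (hpi.const_mul ((24 * A + 2 * B) * (3 * A))).add
      ((hpi.rpow_const (p := 1 / 2) (Or.inr (by norm_num))).const_mul (40 * A ^ 2))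
  obtain ⟨K, hK⟩ := ((hlim.eventually_le_const one_half_pos).and
    (eventually_gt_atTop 0)).exists_forall_of_atTop
  refine ⟨K, (hK K le_rfl).2, fun k F m hk hF hFm z => ?_⟩
  have hk₀ : k ≠ 0 := norm_pos_iff.mp (hK _ hk).2
  have hm : 0 ≤ m := (norm_nonneg _).trans (hFm 0)
  calc _ ≤ _ := norm_scatteringOp_scatteringOp_le hq hA hB hk₀ hF hFm z
    _ ≤ 1 / 2 * m := mul_le_mul_of_nonneg_right (hK _ hk).1 hm
    _ = m / 2 := by ring

variable {v₁ v₂ : ℂ → ℂ}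

theorem IsScattering.isBounded_range_sub_one (hv : IsScattering q k v₁ v₂) :
    IsBounded (Set.range fun z => v₁ z - 1) := by
  obtain ⟨R, hR⟩ := hv.2.1.exists_norm_le
  refine isBounded_iff_forall_norm_le.mpr ⟨R + 1, Set.forall_mem_range.mpr fun z => ?_⟩
  exact (norm_sub_le _ _).trans (add_le_add (hR _ ⟨z, rfl⟩) norm_one.le)

theorem IsScattering.aestronglyMeasurable_sub_one (hv : IsScattering q k v₁ v₂) :
    AEStronglyMeasurable fun z => v₁ z - 1 :=
  (hv.1.sub continuous_const).aestronglyMeasurable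

theorem IsScattering.snd_eq_add (hv : IsScattering q k v₁ v₂) (hA : L1SupBound q A) :
    v₂ = fun z => scatteringOp q k (fun _ => 1) z + scatteringOp q k (fun w => v₁ w - 1) z := by
  obtain ⟨R, hR⟩ := hv.isBounded_range_sub_one.exists_norm_le
  funext z
  rw [← hA.scatteringOp_add aestronglyMeasurable_const (fun _ => norm_one.le)
    hv.aestronglyMeasurable_sub_one (fun w => hR _ ⟨w, rfl⟩)]
  simp only [add_sub_cancel]
  exact hv.2.2.2.2.2 z

theorem IsScattering.fst_sub_one_eq_add (hv : IsScattering q k v₁ v₂) (hA : L1SupBound q A)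
    (z : ℂ) :
    v₁ z - 1 = scatteringOp q k (scatteringOp q k fun _ => 1) z +
      scatteringOp q k (scatteringOp q k fun w => v₁ w - 1) z := by
  obtain ⟨R, hR⟩ := hv.isBounded_range_sub_one.exists_norm_le
  have hone (w : ℂ) : ‖(1 : ℂ)‖ ≤ 1 := norm_one.le
  have hG (w : ℂ) : ‖v₁ w - 1‖ ≤ R := hR _ ⟨w, rfl⟩
  have hG_meas := hv.aestronglyMeasurable_sub_one
  rw [← hA.scatteringOp_add
    (hA.continuous_scatteringOp aestronglyMeasurable_const hone k).aestronglyMeasurable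
    (hA.norm_scatteringOp_le aestronglyMeasurable_const hone k)
    (hA.continuous_scatteringOp hG_meas hG k).aestronglyMeasurable
    (hA.norm_scatteringOp_le hG_meas hG k), ← hv.snd_eq_add hA]
  exact sub_eq_of_eq_add' (hv.2.2.2.2.1 z)

theorem exists_forall_norm_isScattering_le (hq : Differentiable ℝ q) (hA : L1SupBound q A)
    (hB : L1SupBound (fderiv ℝ q) B) :
    ∃ C K : ℝ, ∀ (k : ℂ) (v₁ v₂ : ℂ → ℂ), K ≤ ‖k‖ → IsScattering q k v₁ v₂ →
      ∀ z, ‖v₁ z - 1‖ ≤ C / ‖k‖ ∧ ‖v₂ z‖ ≤ C / ‖k‖ := by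
  obtain ⟨K, hK₀, hK⟩ := exists_forall_norm_scatteringOp_scatteringOp_le_half hq hA hB
  have hA₀ := hA.nonneg
  have hB₀ := hB.nonneg
  set c : ℝ := (24 * A + 2 * B) * Real.pi
  have : 0 ≤ c := by positivity
  refine ⟨6 * A * c + (c + 18 * A ^ 2 * c), K, fun k v₁ v₂ hk hv => ?_⟩
  have hk₀ : k ≠ 0 := norm_pos_iff.mp (hK₀.trans_le hk)
  have hone (z : ℂ) : ‖scatteringOp q k (fun _ => 1) z‖ ≤ c / ‖k‖ :=
    (norm_scatteringOp_one_le hq hA hB hk₀ z).trans_eq (by ring)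
  have hone_cont : Continuous (scatteringOp q k fun _ => 1) :=
    hA.continuous_scatteringOp aestronglyMeasurable_const (fun _ => norm_one.le) k
  have hG : ∀ z, ‖v₁ z - 1‖ ≤ 2 * (3 * A * (c / ‖k‖)) := by
    refine norm_le_of_forall_norm_le_add_half hv.isBounded_range_sub_one fun m hm z => ?_
    rw [hv.fst_sub_one_eq_add hA]
    exact (norm_add_le _ _).trans
      (add_le_add (hA.norm_scatteringOp_le hone_cont.aestronglyMeasurable hone k z)
        (hK k _ m hk hv.aestronglyMeasurable_sub_one hm z))
  refine fun z => ⟨?_, ?_⟩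
  · calc ‖v₁ z - 1‖ ≤ 2 * (3 * A * (c / ‖k‖)) := hG z
      _ = 6 * A * c / ‖k‖ := by ring
      _ ≤ (6 * A * c + (c + 18 * A ^ 2 * c)) / ‖k‖ :=
        div_le_div_of_nonneg_right (le_add_of_nonneg_right (by positivity)) (norm_nonneg k)
  · calc ‖v₂ z‖ ≤ c / ‖k‖ + 3 * A * (2 * (3 * A * (c / ‖k‖))) := by
          rw [hv.snd_eq_add hA]
          exact (norm_add_le _ _).trans (add_le_add (hone z)
            (hA.norm_scatteringOp_le hv.aestronglyMeasurable_sub_one hG k z))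
      _ = (c + 18 * A ^ 2 * c) / ‖k‖ := by ring
      _ ≤ (6 * A * c + (c + 18 * A ^ 2 * c)) / ‖k‖ :=
        div_le_div_of_nonneg_right (le_add_of_nonneg_left (by positivity)) (norm_nonneg k)

end Scattering

theorem stmt16_general {q : ℂ → ℂ} (hq : Differentiable ℝ q) (hq_int : Integrable q)
    (hq_bdd : IsBounded (Set.range q)) (hq'_int : Integrable (fderiv ℝ q))
    (hq'_bdd : IsBounded (Set.range (fderiv ℝ q))) (u₁ u₂ : ℂ → ℂ → ℂ)
    (hu : ∀ k : ℂ, IsScattering q k (fun z => u₁ z k) (fun z => u₂ z k)) :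
    (∃ C K : ℝ, ∀ k : ℂ, K ≤ ‖k‖ → ∀ z : ℂ, ‖u₁ z k - 1‖ ≤ C / ‖k‖) ∧
      ∀ z : ℂ, Tendsto (fun k : ℂ => u₂ z k) (cocompact ℂ) (𝓝 0) := by
  obtain ⟨A, hA⟩ := L1SupBound.exists_of_integrable hq_int hq_bdd
  obtain ⟨B, hB⟩ := L1SupBound.exists_of_integrable hq'_int hq'_bdd
  obtain ⟨C, K, hCK⟩ := exists_forall_norm_isScattering_le hq hA hB
  refine ⟨⟨C, K, fun k hk z => (hCK k _ _ hk (hu k) z).1⟩, fun z => ?_⟩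
  have hnorm : Tendsto (fun k : ℂ => ‖k‖) (cocompact ℂ) atTop := tendsto_norm_cocompact_atTop
  refine squeeze_zero_norm' (a := fun k : ℂ => C / ‖k‖) ?_ (tendsto_const_nhds.div_atTop hnorm)
  filter_upwards [hnorm.eventually_ge_atTop K] with k hk
  exact (hCK k _ _ hk (hu k) z).2

/-- Remark 3.3: large-`k` asymptotics of the scattering solutions. -/
theorem stmt16 (q : 𝓢(ℂ, ℂ)) (u₁ u₂ : ℂ → ℂ → ℂ)
    (hu : ∀ k : ℂ, IsScattering (⇑q) k (fun z => u₁ z k) (fun z => u₂ z k)) :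
    (∃ C K : ℝ, ∀ k : ℂ, K ≤ ‖k‖ → ∀ z : ℂ, ‖u₁ z k - 1‖ ≤ C / ‖k‖) ∧
      ∀ z : ℂ, Tendsto (fun k : ℂ => u₂ z k) (cocompact ℂ) (𝓝 0) :=
  stmt16_general q.differentiable q.integrable q.toBoundedContinuousFunction.isBounded_range
    (SchwartzMap.fderivCLM ℝ ℂ ℂ q).integrable
    (SchwartzMap.fderivCLM ℝ ℂ ℂ q).toBoundedContinuousFunction.isBounded_range u₁ u₂ hu
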